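/- Let (N, W) be a well-spaced instance with clusters C_1,…,C_M and |N| = n, where 1/ε is a positive integer. Let Q ⊆ N, let π : Q → {1,…,|Q|} be a bijection, and let ℳ⁻, ℳ⁺ ⊆ {1,…,M} be disjoint sets of cluster indices with max ℳ⁻ < min ℳ⁺ and Q∩C_{ℳ⁻} ≠ ∅, where C_ℳ = ∪_{m∈ℳ} C_m. Define cross_{ℳ⁻,ℳ⁺}(π) = |{i ∈ Q∩C_{ℳ⁺} : π(i) < max_{j∈Q∩C_{ℳ⁻}} π(j)}|. If cross_{ℳ⁻,ℳ⁺}(π) ≥ 1/ε, then for every item i* that is among the 1/ε items of Q∩C_{ℳ⁺} with smallest π-value, there exists a bijection π̄ : Q∖{i*} → {1,…,|Q|−1} such that cross_{ℳ⁻,ℳ⁺}(π̄) ≤ 1/ε and C_π̄(i) ≤ C_π(i) for every i ∈ Q∖{i*}. -/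

import Mathlib

/-!
Since `i*` lies in a strictly higher cluster than every item of `A = Q ∩ C_{ℳ⁻}`, the spacing
condition gives `n · w a ≤ w i*` for `a ∈ A`, and as `|A| ≤ n` all of `A` together weighs at most
`w i*` (`sum_low_le`). So after deleting `i*`, every item of `A` that follows it can be moved into
the gap, keeping the relative orders: moved items only get earlier, and an item behind the gap loses
`w i*` while gaining at most `∑ a ∈ A, w a`. In the new order every item of `A` precedes all the
items outside `A` that followed `i*`, so a crossing item preceded `i*` in the old order, and there
are at most `1/ε` of those.

The new order is given by an injective key and turned into a bijection onto `{1,…,|Q|-1}` by taking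
ranks (`isPerm_rankIn`, `rankIn_le_iff`).
-/

open Finset

noncomputable section
open scoped Classical

namespace GIK

variable {n : ℕ}

/-- Profit `Φ` of a chain `S : ℕ → Finset (Fin n)` (convention `S 0 = ∅`). -/
def chainProfit (T : ℕ) (p : Fin n → ℕ → ℝ) (S : ℕ → Finset (Fin n)) : ℝ :=
  ∑ t ∈ Finset.Icc 1 T, ∑ i ∈ S t \ S (t - 1), p i t

/-- `S` is a chain: `S 0 = ∅` and the sets are nested along `0,…,T`. -/
def IsChainGIK (T : ℕ) (S : ℕ → Finset (Fin n)) : Prop :=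
  S 0 = ∅ ∧ ∀ t < T, S t ⊆ S (t + 1)

/-- Feasible chain: a chain whose total weight fits each period's capacity. -/
def FeasibleChain (T : ℕ) (w : Fin n → ℝ) (W : ℕ → ℝ) (S : ℕ → Finset (Fin n)) : Prop :=
  IsChainGIK T S ∧ ∀ t ∈ Finset.Icc 1 T, ∑ i ∈ S t, w i ≤ W t

/-- `π` is a bijection from `Q` onto `{1, …, |Q|}`. -/
def IsPerm (Q : Finset (Fin n)) (π : Fin n → ℕ) : Prop :=
  Set.BijOn π ↑Q ↑(Finset.Icc 1 Q.card)

/-- Completion time `C_π(i)` of item `i` in a permutation `π` of `Q`. -/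
def comp (w : Fin n → ℝ) (Q : Finset (Fin n)) (π : Fin n → ℕ) (i : Fin n) : ℝ :=
  ∑ j ∈ Q.filter (fun j => π j ≤ π i), w j

/-- Profit `φ_π(i)` of item `i` under a permutation `π` of `Q`:
the best profit `p i t` over periods `t ∈ {1,…,T}` whose capacity is at least `C_π(i)`,
where the fictitious period `T+1` (infinite capacity, zero profit) is accounted for
by inserting `0` into the maximum. -/
def itemProfit (T : ℕ) (w : Fin n → ℝ) (W : ℕ → ℝ) (p : Fin n → ℕ → ℝ)
    (Q : Finset (Fin n)) (π : Fin n → ℕ) (i : Fin n) : ℝ :=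
  (insert (0 : ℝ)
      (((Finset.Icc 1 T).filter (fun t => comp w Q π i ≤ W t)).image (fun t => p i t))).max'
    (Finset.insert_nonempty _ _)

/-- Total profit `Ψ(π)` of a permutation `π` of `Q`. -/
def permProfit (T : ℕ) (w : Fin n → ℝ) (W : ℕ → ℝ) (p : Fin n → ℕ → ℝ)
    (Q : Finset (Fin n)) (π : Fin n → ℕ) : ℝ :=
  ∑ i ∈ Q, itemProfit T w W p Q π i

/-- Insertion time of item `i` in a chain `S` (equal to `T+1` if `i` is never inserted). -/
def insTime (T : ℕ) (S : ℕ → Finset (Fin n)) (i : Fin n) : ℕ :=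
  if h : ((Finset.Icc 1 T).filter (fun t => i ∈ S t)).Nonempty
  then ((Finset.Icc 1 T).filter (fun t => i ∈ S t)).min' h
  else T + 1

/-- `K = ⌈log_{1+ε} (Σ_i w_i)⌉`. -/
def Kof (w : Fin n → ℝ) (ε : ℝ) : ℕ := ⌈Real.logb (1 + ε) (∑ i, w i)⌉₊

/-- Membership of `x` in the interval `I_k` (`I_0 = [0,1]`, `I_k = ((1+ε)^{k-1}, (1+ε)^k]`). -/
def inInterval (ε : ℝ) (k : ℕ) (x : ℝ) : Prop :=
  if k = 0 then x ∈ Set.Icc (0 : ℝ) 1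
  else x ∈ Set.Ioc ((1 + ε) ^ (k - 1)) ((1 + ε) ^ k)

/-- Item `i` is `k`-heavy: `w i ≥ ε² (1+ε)^k`. -/
def Heavy (w : Fin n → ℝ) (ε : ℝ) (k : ℕ) (i : Fin n) : Prop :=
  ε ^ 2 * (1 + ε) ^ k ≤ w i

/-- `Ψ_heavy(π)` for a permutation `π` of all items. -/
def psiHeavy (T : ℕ) (w : Fin n → ℝ) (W : ℕ → ℝ) (p : Fin n → ℕ → ℝ) (ε : ℝ)
    (π : Fin n → ℕ) : ℝ :=
  ∑ k ∈ Finset.range (Kof w ε + 1),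
    ∑ i ∈ Finset.univ.filter
        (fun i : Fin n => Heavy w ε k i ∧ inInterval ε k (comp w Finset.univ π i)),
      itemProfit T w W p Finset.univ π i

/-- `Ψ_light(π)` for a permutation `π` of all items. -/
def psiLight (T : ℕ) (w : Fin n → ℝ) (W : ℕ → ℝ) (p : Fin n → ℕ → ℝ) (ε : ℝ)
    (π : Fin n → ℕ) : ℝ :=
  ∑ k ∈ Finset.range (Kof w ε + 1),
    ∑ i ∈ Finset.univ.filter
        (fun i : Fin n => ¬ Heavy w ε k i ∧ inInterval ε k (comp w Finset.univ π i)),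
      itemProfit T w W p Finset.univ π i

/-- A pair `(S, π)` is bulky: `π` is a bijection `S → {1,…,|S|}` and every item whose
completion time lies in `I_k` is `k`-heavy. -/
def Bulky (w : Fin n → ℝ) (ε : ℝ) (S : Finset (Fin n)) (π : Fin n → ℕ) : Prop :=
  IsPerm S π ∧
    ∀ k ∈ Finset.range (Kof w ε + 1), ∀ i ∈ S,
      inInterval ε k (comp w S π i) → Heavy w ε k i

/-- Capacity of bucket `B_k`. -/
def bucketCap (ε : ℝ) (k : ℕ) : ℝ := (1 + ε) ^ k - (1 + ε) ^ (k - 1)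

/-- Assignment profit `q_{i,k}`. -/
def qProfit (T : ℕ) (W : ℕ → ℝ) (p : Fin n → ℕ → ℝ) (ε : ℝ) (i : Fin n) (k : ℕ) : ℝ :=
  (insert (0 : ℝ)
      (((Finset.Icc 1 T).filter (fun t => (1 + ε) ^ k ≤ W t)).image (fun t => p i t))).max'
    (Finset.insert_nonempty _ _)

/-- LP feasibility of an assignment vector `x` (indices `k ∈ {1,…,K-1}`, `i ∈ L_{k+1}`). -/
def LPfeasible (w : Fin n → ℝ) (ε : ℝ) (x : Fin n → ℕ → ℝ) : Prop :=
  (∀ i : Fin n, ∀ k ∈ Finset.Icc 1 (Kof w ε - 1), ¬ Heavy w ε (k + 1) i → 0 ≤ x i k) ∧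
  (∀ i : Fin n,
      ∑ k ∈ (Finset.Icc 1 (Kof w ε - 1)).filter (fun k => ¬ Heavy w ε (k + 1) i),
        x i k ≤ 1) ∧
  (∀ k ∈ Finset.Icc 1 (Kof w ε - 1),
      ∑ i ∈ Finset.univ.filter (fun i : Fin n => ¬ Heavy w ε (k + 1) i),
        w i * x i k ≤ bucketCap ε k)

/-- IP feasibility: LP feasibility together with integrality. -/
def IPfeasible (w : Fin n → ℝ) (ε : ℝ) (x : Fin n → ℕ → ℝ) : Prop :=
  LPfeasible w ε x ∧
    ∀ i : Fin n, ∀ k ∈ Finset.Icc 1 (Kof w ε - 1), ¬ Heavy w ε (k + 1) i →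
      x i k = 0 ∨ x i k = 1

/-- Objective value `Σ_k Σ_{i ∈ L_{k+1}} q_{i,k} x_{i,k}` of an assignment vector. -/
def assignProfit (T : ℕ) (w : Fin n → ℝ) (W : ℕ → ℝ) (p : Fin n → ℕ → ℝ) (ε : ℝ)
    (x : Fin n → ℕ → ℝ) : ℝ :=
  ∑ k ∈ Finset.Icc 1 (Kof w ε - 1),
    ∑ i ∈ Finset.univ.filter (fun i : Fin n => ¬ Heavy w ε (k + 1) i),
      qProfit T W p ε i k * x i k

/-- Residual capacities `W_t^{-G} = min_{t ≤ τ ≤ T} (W_τ − w(G_τ))`. -/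
def resW (T : ℕ) (w : Fin n → ℝ) (W : ℕ → ℝ) (G : ℕ → Finset (Fin n)) (t : ℕ) : ℝ :=
  if h : (Finset.Icc t T).Nonempty
  then (Finset.Icc t T).inf' h (fun τ => W τ - ∑ i ∈ G τ, w i)
  else 0

/-- Feasible chain for the residual instance `I^{-G}` (item set `N ∖ G_T`,
capacities `resW`). -/
def ResFeasibleChain (T : ℕ) (w : Fin n → ℝ) (W : ℕ → ℝ) (G : ℕ → Finset (Fin n))
    (R : ℕ → Finset (Fin n)) : Prop :=
  IsChainGIK T R ∧ (∀ t ∈ Finset.Icc 1 T, Disjoint (R t) (G T)) ∧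
    ∀ t ∈ Finset.Icc 1 T, ∑ i ∈ R t, w i ≤ resW T w W G t

/-- The instance restricted to item set `N'` is well-spaced with clusters `C 1, …, C M`. -/
def WellSpaced (w : Fin n → ℝ) (ε : ℝ) (N' : Finset (Fin n)) (M : ℕ)
    (C : ℕ → Finset (Fin n)) : Prop :=
  (N' = (Finset.Icc 1 M).biUnion C) ∧
  (∀ m₁ ∈ Finset.Icc 1 M, ∀ m₂ ∈ Finset.Icc 1 M, m₁ ≠ m₂ → Disjoint (C m₁) (C m₂)) ∧
  (∀ m ∈ Finset.Icc 1 M, ∀ i₁ ∈ C m, ∀ i₂ ∈ C m, w i₂ / w i₁ ≤ (n : ℝ) ^ ((1 : ℝ) / ε)) ∧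
  (∀ m₁ ∈ Finset.Icc 1 M, ∀ m₂ ∈ Finset.Icc 1 M, m₁ < m₂ →
    ∀ i₁ ∈ C m₁, ∀ i₂ ∈ C m₂,
      (n : ℝ) ^ (1 + ((m₂ - m₁ - 1 : ℕ) : ℝ) / ε) ≤ w i₂ / w i₁)

/-- `C_{[a,b]} = C_a ∪ ⋯ ∪ C_b`. -/
def clusterUnion (C : ℕ → Finset (Fin n)) (a b : ℕ) : Finset (Fin n) :=
  (Finset.Icc a b).biUnion C

/-- `cross_m(π)`: the number of items of `Q` in clusters `C_{m+1},…,C_M` that appear in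
`π` before the last item of `Q` belonging to `C_m` (zero when `Q ∩ C_m = ∅`). -/
def crossCount (M : ℕ) (C : ℕ → Finset (Fin n)) (Q : Finset (Fin n)) (π : Fin n → ℕ)
    (m : ℕ) : ℕ :=
  ((Q ∩ clusterUnion C (m + 1) M).filter (fun i => π i < (Q ∩ C m).sup π)).card

/-- `cross_{ℳ⁻,ℳ⁺}(π)`: the number of items of `Q` in `ℳ⁺`-indexed clusters appearing in
`π` before the last item of `Q` in `ℳ⁻`-indexed clusters. -/
def crossSets (C : ℕ → Finset (Fin n)) (Mm Mp : Finset ℕ) (Q : Finset (Fin n))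
    (π : Fin n → ℕ) : ℕ :=
  ((Q ∩ Mp.biUnion C).filter (fun i => π i < (Q ∩ Mm.biUnion C).sup π)).card

/-- A pair `(S, π)` is thin: `π` is a permutation of `S` and `cross_m(π) ≤ ⌈log₂ M⌉/ε`
for every `m`. -/
def ThinPair (M : ℕ) (C : ℕ → Finset (Fin n)) (ε : ℝ) (S : Finset (Fin n))
    (π : Fin n → ℕ) : Prop :=
  IsPerm S π ∧
    ∀ m ∈ Finset.Icc 1 M, (crossCount M C S π m : ℝ) ≤ (Nat.clog 2 M : ℝ) / ε

/-- Membership of `(S, π)` in `Thin(m, ψ, Q_{>m})`. -/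
def InThin (T : ℕ) (w : Fin n → ℝ) (W : ℕ → ℝ) (p : Fin n → ℕ → ℝ) (M : ℕ)
    (C : ℕ → Finset (Fin n)) (ε : ℝ) (m : ℕ) (ψ : ℝ) (Qm : Finset (Fin n))
    (S : Finset (Fin n)) (π : Fin n → ℕ) : Prop :=
  ThinPair M C ε S π ∧ S ⊆ clusterUnion C 1 m ∪ Qm ∧ Qm ⊆ S ∧
    ψ ≤ permProfit T w W p S π

end GIK

namespace GIK

variable {n : ℕ}

/-! ### Permutations from injective keys -/

/-- Rank of `i` within `S` for the order induced by the key `κ`, counted from `1` when `i ∈ S`. -/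
def rankIn (S : Finset (Fin n)) (κ : Fin n → ℕ) (i : Fin n) : ℕ :=
  (S.filter (fun j => κ j ≤ κ i)).card

lemma rankIn_le_iff {S : Finset (Fin n)} {κ : Fin n → ℕ} {i j : Fin n} (hj : j ∈ S) :
    rankIn S κ j ≤ rankIn S κ i ↔ κ j ≤ κ i := by
  constructor
  · intro h
    by_contra! hlt
    refine absurd h (not_le.mpr (Finset.card_lt_card ?_))
    refine Finset.ssubset_iff_subset_ne.mpr ⟨fun x hx => ?_, fun heq => ?_⟩
    · simp only [Finset.mem_filter] at hx ⊢
      exact ⟨hx.1, hx.2.trans hlt.le⟩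
    · have : j ∈ S.filter (fun x => κ x ≤ κ i) := by
        rw [heq]; simp [hj]
      simp only [Finset.mem_filter] at this
      omega
  · intro h
    refine Finset.card_le_card fun x hx => ?_
    simp only [Finset.mem_filter] at hx ⊢
    exact ⟨hx.1, hx.2.trans h⟩

lemma isPerm_rankIn {S : Finset (Fin n)} {κ : Fin n → ℕ} (hκ : Set.InjOn κ ↑S) :
    IsPerm S (rankIn S κ) := by
  have hmaps : Set.MapsTo (rankIn S κ) ↑S ↑(Finset.Icc 1 S.card) := by
    intro i hi
    rw [Finset.mem_coe, Finset.mem_Icc]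
    refine ⟨Finset.card_pos.mpr ⟨i, ?_⟩, Finset.card_le_card (Finset.filter_subset _ _)⟩
    simpa using hi
  have hinj : Set.InjOn (rankIn S κ) ↑S := by
    intro i hi j hj h
    exact hκ hi hj (le_antisymm ((rankIn_le_iff hi).1 h.le) ((rankIn_le_iff hj).1 h.ge))
  exact ⟨hmaps, hinj, Finset.surjOn_of_injOn_of_card_le _ hmaps hinj (by simp)⟩

lemma comp_rankIn (w : Fin n → ℝ) (S : Finset (Fin n)) (κ : Fin n → ℕ) (i : Fin n) :
    comp w S (rankIn S κ) i = ∑ j ∈ S.filter (fun j => κ j ≤ κ i), w j := by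
  unfold comp
  congr 1
  exact Finset.filter_congr fun j hj => rankIn_le_iff hj

/-! ### Weight of the low clusters -/

/-- A set of items lying in clusters below that of `x` weighs at most `w x` in total. -/
lemma sum_low_le {w : Fin n → ℝ} (hw : ∀ i, 0 < w i) {ε : ℝ} (hε : 0 < ε) {M : ℕ}
    {C : ℕ → Finset (Fin n)} (hws : WellSpaced w ε Finset.univ M C) {A : Finset (Fin n)}
    {m₂ : ℕ} (hm₂ : m₂ ∈ Finset.Icc 1 M) {x : Fin n} (hx : x ∈ C m₂)
    (hA : ∀ a ∈ A, ∃ m₁ ∈ Finset.Icc 1 M, m₁ < m₂ ∧ a ∈ C m₁) :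
    ∑ a ∈ A, w a ≤ w x := by
  have hn : 1 ≤ n := Nat.one_le_of_lt x.pos
  have hn' : (1 : ℝ) ≤ n := by exact_mod_cast hn
  have hle : ∀ a ∈ A, w a ≤ w x / n := by
    intro a ha
    obtain ⟨m₁, hm₁, hlt, hac⟩ := hA a ha
    have h := hws.2.2.2 m₁ hm₁ m₂ hm₂ hlt a hac x hx
    have h1 : (n : ℝ) ≤ (n : ℝ) ^ (1 + ((m₂ - m₁ - 1 : ℕ) : ℝ) / ε) := by
      refine Real.self_le_rpow_of_one_le hn' ?_
      have : 0 ≤ ((m₂ - m₁ - 1 : ℕ) : ℝ) / ε := by positivity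
      linarith
    have h2 := h1.trans h
    rw [le_div_iff₀ (hw a)] at h2
    rw [le_div_iff₀ (by linarith)]
    linarith
  have hcard : (A.card : ℝ) ≤ n := by
    have := Finset.card_le_univ A
    rw [Fintype.card_fin] at this
    exact_mod_cast this
  calc ∑ a ∈ A, w a ≤ A.card • (w x / n) := Finset.sum_le_card_nsmul _ _ _ hle
    _ = A.card * (w x / n) := nsmul_eq_mul _ _
    _ ≤ n * (w x / n) := mul_le_mul_of_nonneg_right hcard (div_nonneg (hw x).le (by linarith))
    _ = w x := by field_simp

/-! ### Filling the gap with low items -/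

/-- Key of the new order: the items outside `A` that follow `x` under `π` are shifted by `q`,
hence behind all other items when `π` has values in `{1,…,q}`. -/
def moveKey (A : Finset (Fin n)) (π : Fin n → ℕ) (x : Fin n) (q : ℕ) (i : Fin n) : ℕ :=
  if π x < π i ∧ i ∉ A then π i + q else π i

lemma moveKey_injOn {A Q : Finset (Fin n)} {π : Fin n → ℕ} (hπ : IsPerm Q π) (x : Fin n) :
    Set.InjOn (moveKey A π x Q.card) ↑Q := by
  intro i hi j hj h
  have h1 := Finset.mem_Icc.1 (Finset.mem_coe.1 (hπ.1 hi))
  have h2 := Finset.mem_Icc.1 (Finset.mem_coe.1 (hπ.1 hj))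
  apply hπ.2.1 hi hj
  unfold moveKey at h
  split_ifs at h <;> omega

/-- If `A` weighs at most `w x`, moving the items of `A` that follow `x` into the place of `x`
delays no item. -/
lemma comp_moveKey_le {w : Fin n → ℝ} (hw : ∀ i, 0 < w i) {A Q : Finset (Fin n)}
    {π : Fin n → ℕ} {x : Fin n} (hx : x ∈ Q) (hA : ∑ a ∈ A, w a ≤ w x) (i : Fin n) :
    comp w (Q.erase x) (rankIn (Q.erase x) (moveKey A π x Q.card)) i ≤ comp w Q π i := by
  rw [comp_rankIn]
  unfold comp
  by_cases hc : π x < π i ∧ i ∉ A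
  · have hsub : (Q.erase x).filter (fun j => moveKey A π x Q.card j ≤ moveKey A π x Q.card i) ⊆
        (Q.filter (fun j => π j ≤ π i)).erase x ∪ A := by
      intro j hj
      simp only [Finset.mem_filter, Finset.mem_erase, Finset.mem_union] at hj ⊢
      by_cases hjA : j ∈ A
      · exact Or.inr hjA
      · refine Or.inl ⟨hj.1.1, hj.1.2, ?_⟩
        have h := hj.2
        unfold moveKey at h
        rw [if_pos hc] at h
        split_ifs at h with h'
        · omega
        · have : ¬ π x < π j := fun hlt => h' ⟨hlt, hjA⟩
          omega
    have hxm : x ∈ Q.filter (fun j => π j ≤ π i) := by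
      simp [hx, hc.1.le]
    have h1 := Finset.sum_le_sum_of_subset_of_nonneg hsub (fun j _ _ => (hw j).le)
    have h2 := Finset.sum_union_inter (s₁ := (Q.filter (fun j => π j ≤ π i)).erase x)
      (s₂ := A) (f := w)
    have h3 : 0 ≤ ∑ j ∈ (Q.filter (fun j => π j ≤ π i)).erase x ∩ A, w j :=
      Finset.sum_nonneg fun j _ => (hw j).le
    have h4 := Finset.sum_erase_add _ w hxm
    linarith
  · refine Finset.sum_le_sum_of_subset_of_nonneg ?_ (fun j _ _ => (hw j).le)
    intro j hj
    simp only [Finset.mem_filter, Finset.mem_erase] at hj ⊢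
    refine ⟨hj.1.2, ?_⟩
    have h := hj.2
    unfold moveKey at h
    rw [if_neg hc] at h
    split_ifs at h <;> omega

end GIK

open GIK Finset in
theorem stmt18 {n : ℕ} (w : Fin n → ℝ) (hw : ∀ i, 0 < w i)
    (ε : ℝ) (hε : ε ∈ Set.Ioo (0 : ℝ) 1)
    (kε : ℕ) (hkε : 0 < kε) (hkεε : (kε : ℝ) = 1 / ε)
    (M : ℕ) (C : ℕ → Finset (Fin n)) (hws : WellSpaced w ε Finset.univ M C)
    (Q : Finset (Fin n)) (π : Fin n → ℕ) (hπ : IsPerm Q π)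
    (Mm Mp : Finset ℕ) (hMm : Mm ⊆ Finset.Icc 1 M) (hMp : Mp ⊆ Finset.Icc 1 M)
    (hdisj : Disjoint Mm Mp) (hMmne : Mm.Nonempty) (hMpne : Mp.Nonempty)
    (hlt : Mm.max' hMmne < Mp.min' hMpne)
    (hQMm : (Q ∩ Mm.biUnion C).Nonempty)
    (hcross : kε ≤ crossSets C Mm Mp Q π)
    (istar : Fin n) (histar : istar ∈ Q ∩ Mp.biUnion C)
    (hfirst : ((Q ∩ Mp.biUnion C).filter (fun j => π j ≤ π istar)).card ≤ kε) :
    ∃ πb : Fin n → ℕ, IsPerm (Q.erase istar) πb ∧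
      crossSets C Mm Mp (Q.erase istar) πb ≤ kε ∧
      ∀ i ∈ Q.erase istar, comp w (Q.erase istar) πb i ≤ comp w Q π i := by
  have hsep : ∀ m₁ ∈ Mm, ∀ m₂ ∈ Mp, m₁ < m₂ := fun m₁ h₁ m₂ h₂ =>
    ((Finset.le_max' _ _ h₁).trans_lt hlt).trans_le (Finset.min'_le _ _ h₂)
  obtain ⟨hsQ, hsB⟩ := Finset.mem_inter.1 histar
  obtain ⟨m₂, hm₂, hsC⟩ := Finset.mem_biUnion.1 hsB
  have hsum : ∑ a ∈ Q ∩ Mm.biUnion C, w a ≤ w istar := by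
    refine sum_low_le hw hε.1 hws (hMp hm₂) hsC fun a ha => ?_
    obtain ⟨m₁, hm₁, haC⟩ := Finset.mem_biUnion.1 (Finset.mem_inter.1 ha).2
    exact ⟨m₁, hMm hm₁, hsep m₁ hm₁ m₂ hm₂, haC⟩
  refine ⟨rankIn (Q.erase istar) (moveKey (Q ∩ Mm.biUnion C) π istar Q.card),
    isPerm_rankIn ((moveKey_injOn hπ istar).mono (by simp)), ?_,
    fun i _ => comp_moveKey_le hw hsQ hsum i⟩
  refine le_trans (Finset.card_le_card ?_) hfirst
  intro i hi
  obtain ⟨hi, hsup⟩ := Finset.mem_filter.1 hi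
  obtain ⟨hiQ, hiB⟩ := Finset.mem_inter.1 hi
  obtain ⟨a, ha, hia⟩ := Finset.lt_sup_iff.1 hsup
  obtain ⟨haQ, haA⟩ := Finset.mem_inter.1 ha
  have haQ' := Finset.mem_of_mem_erase haQ
  have hiQ' := Finset.mem_of_mem_erase hiQ
  refine Finset.mem_filter.2 ⟨Finset.mem_inter.2 ⟨hiQ', hiB⟩, ?_⟩
  have hiA : i ∉ Q ∩ Mm.biUnion C := by
    intro h
    obtain ⟨k₁, hk₁, h1⟩ := Finset.mem_biUnion.1 (Finset.mem_inter.1 h).2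
    obtain ⟨k₂, hk₂, h2⟩ := Finset.mem_biUnion.1 hiB
    exact Finset.disjoint_left.1
      (hws.2.1 k₁ (hMm hk₁) k₂ (hMp hk₂) (hsep k₁ hk₁ k₂ hk₂).ne) h1 h2
  have hκ := not_le.1 (fun h => absurd ((rankIn_le_iff haQ).2 h) (not_le.2 hia))
  have ha' : a ∈ Q ∩ Mm.biUnion C := Finset.mem_inter.2 ⟨haQ', haA⟩
  have hac := Finset.mem_Icc.1 (Finset.mem_coe.1 (hπ.1 haQ'))
  by_contra! hlt'
  -- An item outside `A` behind `i*` has key above `|Q|`, whereas the key of `a ∈ A` is `π a ≤ |Q|`.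
  unfold moveKey at hκ
  rw [if_pos ⟨hlt', hiA⟩, if_neg (fun h => h.2 ha')] at hκ
  omega
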